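/- Every convex pentagon whose interior angles satisfy A + B + C = 360° and whose side lengths satisfy a = d admits a monohedral tiling of the plane that is not edge-to-edge (a non-edge-to-edge tiling). -/

import Mathlib

open EuclideanGeometry

noncomputable section

/-- The Euclidean plane. -/
abbrev Plane : Type := EuclideanSpace ℝ (Fin 2)

/-- A convex polygon with `n` vertices: `n` points of the plane in strictly convex
position, labeled in cyclic order (each segment joining cyclically consecutive
vertices lies on the boundary of the convex hull). -/
structure ConvexPolygon (n : ℕ) [NeZero n] where
  V : Fin n → Plane
  strictlyConvex : ∀ i : Fin n, V i ∉ convexHull ℝ (V '' {j | j ≠ i})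
  cyclic : ∀ i : Fin n, segment ℝ (V i) (V (i + 1)) ⊆ frontier (convexHull ℝ (Set.range V))

namespace ConvexPolygon

variable {n : ℕ} [NeZero n]

/-- The polygon, as a subset of the plane (the convex hull of its vertices). -/
def carrier (P : ConvexPolygon n) : Set Plane := convexHull ℝ (Set.range P.V)

/-- The interior angle (in radians) at the `i`-th vertex. -/
def angle (P : ConvexPolygon n) (i : Fin n) : ℝ :=
  EuclideanGeometry.angle (P.V (i - 1)) (P.V i) (P.V (i + 1))

/-- The length of the side joining the `i`-th vertex to the next one. -/
def side (P : ConvexPolygon n) (i : Fin n) : ℝ := dist (P.V i) (P.V (i + 1))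

end ConvexPolygon

/-- A convex pentagon.  Its angles `A, B, C, D, E` are `angle 0, …, angle 4` and
its sides `a, b, c, d, e` are `side 0, …, side 4`. -/
abbrev ConvexPentagon := ConvexPolygon 5

/-- `t` is an isometric copy of `P`. -/
def IsIsometricCopy (t P : Set Plane) : Prop :=
  ∃ g : Plane ≃ᵢ Plane, t = g '' P

/-- `T` is a monohedral tiling of the plane by isometric copies of `P`:
the tiles cover the plane and have pairwise disjoint interiors. -/
def IsMonohedralTiling (P : Set Plane) (T : Set (Set Plane)) : Prop :=
  (∀ t ∈ T, IsIsometricCopy t P) ∧ ⋃₀ T = Set.univ ∧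
    T.Pairwise fun t s => interior t ∩ interior s = ∅

/-- `x` is a vertex (extreme point) of the convex polygonal tile `t`. -/
def IsVertexOf (x : Plane) (t : Set Plane) : Prop := x ∈ Set.extremePoints ℝ t

/-- `e` is an edge (a full side) of the convex polygonal tile `t`: a segment
joining two distinct vertices of `t` that lies on the boundary of `t`. -/
def IsEdgeOf (e t : Set Plane) : Prop :=
  ∃ x y : Plane, x ≠ y ∧ IsVertexOf x t ∧ IsVertexOf y t ∧
    e = segment ℝ x y ∧ e ⊆ frontier t

/-- A tiling by convex polygons is edge-to-edge if any two distinct tiles meet in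
the empty set, a common vertex, or a common edge. -/
def IsEdgeToEdge (T : Set (Set Plane)) : Prop :=
  ∀ t ∈ T, ∀ s ∈ T, t ≠ s →
    t ∩ s = ∅ ∨
    (∃ x : Plane, t ∩ s = {x} ∧ IsVertexOf x t ∧ IsVertexOf x s) ∨
    (∃ e : Set Plane, t ∩ s = e ∧ IsEdgeOf e t ∧ IsEdgeOf e s)

/-- A tiling is periodic if translations by two linearly independent vectors map
every tile onto a tile. -/
def IsPeriodic (T : Set (Set Plane)) : Prop :=
  ∃ u v : Plane, LinearIndependent ℝ ![u, v] ∧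
    (∀ t ∈ T, (fun x => x + u) '' t ∈ T) ∧ (∀ t ∈ T, (fun x => x + v) '' t ∈ T)

/-- An isometry is a symmetry of the tiling `T` if it maps the tiles of `T` onto
the tiles of `T`. -/
def IsSymmetryOf (g : Plane ≃ᵢ Plane) (T : Set (Set Plane)) : Prop :=
  (fun t => g '' t) '' T = T

/-- A tiling is isohedral if its symmetry group acts transitively on the tiles. -/
def IsIsohedral (T : Set (Set Plane)) : Prop :=
  ∀ t ∈ T, ∀ s ∈ T, ∃ g : Plane ≃ᵢ Plane, IsSymmetryOf g T ∧ g '' t = s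

/-- Two tiles are equivalent if some symmetry of the tiling maps one onto the other. -/
def SymEquiv (T : Set (Set Plane)) (t s : Set Plane) : Prop :=
  ∃ g : Plane ≃ᵢ Plane, IsSymmetryOf g T ∧ g '' t = s

/-- A direct (orientation-preserving) isometry of the plane: an affine isometry
whose linear part has positive determinant. -/
def IsDirectIsometry (g : Plane ≃ᵢ Plane) : Prop :=
  ∃ (L : Plane ≃ₗᵢ[ℝ] Plane) (w : Plane),
    0 < LinearMap.det (L.toLinearEquiv : Plane →ₗ[ℝ] Plane) ∧ ∀ x, g x = L x + w

/-- Relabeling of the vertices of a pentagon: a cyclic shift by `k`, with the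
orientation reversed when `r = true`. -/
def relabel (k : Fin 5) (r : Bool) (i : Fin 5) : Fin 5 := if r then k - i else k + i

/-- Parameters of the pentagon in affine coordinates, plus the slide `s`. -/
structure Par where
  c : ℝ
  α : ℝ
  β : ℝ
  y0 : ℝ
  s : ℝ
  hc : 0 < c
  hy0 : 0 < y0
  hy1 : y0 < 1
  hαβ : 0 < α + β
  hx : c + α * y0 = 1 + β - β * y0
  hs : s = 0 ∨ 1 - c = 0

namespace Par

def f (p : Par) (y : ℝ) : ℝ := min (p.c + p.α * y) (1 + p.β - p.β * y)
def δ (p : Par) : ℝ := 1 - p.c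
def X (p : Par) : ℝ := p.c + p.α * p.y0 + 1
def η (p : Par) : ℝ := p.y0 - p.s
def S (p : Par) (x y : ℝ) : Prop := 0 ≤ y ∧ y ≤ 1 ∧ 0 ≤ x ∧ x ≤ p.f y
def So (p : Par) (x y : ℝ) : Prop := 0 < y ∧ y < 1 ∧ 0 < x ∧ x < p.f y

theorem f_left (p : Par) {y : ℝ} (hy : y ≤ p.y0) : p.f y = p.c + p.α * y := by
  have := p.hαβ
  have := p.hx
  rw [f, min_eq_left]; nlinarith

theorem f_right (p : Par) {y : ℝ} (hy : p.y0 ≤ y) : p.f y = 1 + p.β - p.β * y := by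
  have := p.hαβ
  have := p.hx
  rw [f, min_eq_right]; nlinarith

theorem key (p : Par) (z : ℝ) :
    ⌊z + p.η⌋ * p.δ + p.f (Int.fract (z + p.η))
      = p.X + ⌊z - p.s⌋ * p.δ - p.f (1 - Int.fract (z - p.s)) := by
  obtain ⟨v, rfl⟩ : ∃ v, z = v + p.s := ⟨z - p.s, by ring⟩
  have e1 : v + p.s + p.η = v + p.y0 := by rw [η]; ring
  have e2 : v + p.s - p.s = v := by ring
  have hx := p.hx
  have hy0 := p.hy0
  have hy1 := p.hy1
  rw [e1, e2]
  have h0 := Int.fract_nonneg v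
  have h1 := Int.fract_lt_one v
  have h2 := Int.floor_add_fract v
  set r := Int.fract v with hr
  set n := ⌊v⌋ with hn
  by_cases h : r + p.y0 < 1
  · have : ⌊v + p.y0⌋ = n := by
      rw [Int.floor_eq_iff]; constructor <;> linarith
    rw [Int.fract, this, f_right _ (by linarith), f_right _ (by linarith)]
    rw [X, ← h2]; linear_combination (-1)*hx
  · push Not at h
    have : ⌊v + p.y0⌋ = n + 1 := by
      rw [Int.floor_eq_iff]; push_cast; constructor <;> linarith
    rw [Int.fract, this, f_left _ (by push_cast; linarith), f_left _ (by linarith)]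
    rw [X, ← h2]; push_cast; rw [δ]; ring

theorem floor_s (p : Par) (z : ℝ) : (⌊z⌋ : ℝ) * p.δ = ⌊z - p.s⌋ * p.δ := by
  rcases p.hs with h | h
  · rw [h, sub_zero]
  · rw [δ, h]; simp

theorem f_lower (p : Par) : ∃ m > 0, ∀ y, 0 ≤ y → y ≤ 1 → m ≤ p.f y := by
  refine ⟨min p.c 1, lt_min p.hc one_pos, fun y h0 h1 => ?_⟩
  have hx := p.hx
  have hy0 := p.hy0
  have hy1 := p.hy1
  have hab := p.hαβ
  have hc := p.hc
  have a1 : 1 ≤ p.c + p.α := by nlinarith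
  have a2 : p.c ≤ 1 + p.β := by nlinarith
  have m1 := min_le_left p.c 1
  have m2 := min_le_right p.c 1
  set m := min p.c 1
  apply le_min <;> nlinarith

def B (p : Par) (y : ℝ) (k : ℤ) : ℝ := k * p.X + ⌊y - k * p.η⌋ * p.δ
def C (p : Par) (y : ℝ) (k : ℤ) : ℝ := p.B y k + p.f (Int.fract (y - k * p.η))

theorem C_eq (p : Par) (y : ℝ) (k : ℤ) :
    p.C y k = p.B y (k + 1) - p.f (1 - Int.fract (y - (k + 1 : ℤ) * p.η - p.s)) := by
  have h := p.key (y - (k + 1 : ℤ) * p.η)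
  have e : y - (k + 1 : ℤ) * p.η + p.η = y - k * p.η := by push_cast; ring
  rw [e, ← floor_s] at h
  rw [C, B, B]
  push_cast at h ⊢
  linarith

/-- coordinates of a point in the frame of the tile with index `(b,k,n)` -/
def tx (p : Par) (b : Bool) (k n : ℤ) (x : ℝ) : ℝ :=
  if b then k * p.X + n * p.δ - x else x - k * p.X - n * p.δ
def ty (p : Par) (b : Bool) (k n : ℤ) (y : ℝ) : ℝ :=
  if b then 1 + p.s + k * p.η + n - y else y - k * p.η - n

theorem cover (p : Par) (x y : ℝ) : ∃ b k n, p.S (p.tx b k n x) (p.ty b k n y) := by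
  obtain ⟨m, hm, hf⟩ := p.f_lower
  have hBC : ∀ k, p.B y k + m ≤ p.C y k := fun k => by
    have := hf _ (Int.fract_nonneg (y - k * p.η)) (Int.fract_lt_one _).le
    rw [C]; linarith
  have hCB : ∀ k, p.C y k + m ≤ p.B y (k + 1) := fun k => by
    have := hf (1 - Int.fract (y - (k + 1 : ℤ) * p.η - p.s))
      (by linarith [Int.fract_lt_one (y - (k + 1 : ℤ) * p.η - p.s)])
      (by linarith [Int.fract_nonneg (y - (k + 1 : ℤ) * p.η - p.s)])
    rw [C_eq]; linarith
  have hmono : Monotone (fun k : ℤ => p.B y k - 2 * m * k) := by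
    apply monotone_int_of_le_succ
    intro n
    have := hBC n
    have := hCB n
    push_cast; linarith
  obtain ⟨k, hk, hk'⟩ : ∃ k, p.B y k ≤ x ∧ x < p.B y (k + 1) := by
    obtain ⟨k, hk, hk'⟩ := Int.exists_greatest_of_bdd (P := fun k => p.B y k ≤ x) (by
      obtain ⟨N, hN⟩ := exists_nat_gt ((x - p.B y 0) / (2 * m))
      rw [div_lt_iff₀ (by positivity)] at hN
      refine ⟨N, fun z hz => ?_⟩
      by_contra hlt
      push Not at hlt
      have h1 := hmono (show (0:ℤ) ≤ z by omega)
      have h2 : (N : ℝ) ≤ z := by exact_mod_cast hlt.le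
      simp only [Int.cast_zero] at h1
      nlinarith) (by
      obtain ⟨N, hN⟩ := exists_nat_gt ((p.B y 0 - x) / (2 * m))
      rw [div_lt_iff₀ (by positivity)] at hN
      refine ⟨-N, ?_⟩
      have h1 := hmono (show (-N:ℤ) ≤ 0 by omega)
      simp only [Int.cast_zero, Int.cast_neg, Int.cast_natCast] at h1
      nlinarith)
    refine ⟨k, hk, ?_⟩
    by_contra h
    have := hk' (k + 1) (not_lt.mp h)
    omega
  by_cases h : x ≤ p.C y k
  · refine ⟨false, k, ⌊y - k * p.η⌋, ?_⟩
    simp only [tx, ty, S]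
    have h3 : y - k * p.η - ⌊y - k * p.η⌋ = Int.fract (y - k * p.η) := rfl
    rw [C, B] at h
    rw [B] at hk
    refine ⟨?_, ?_, ?_, ?_⟩
    · simp
    · simpa using (Int.fract_lt_one (y - k * p.η)).le
    · simp; linarith
    · simp; linarith
  · refine ⟨true, k + 1, ⌊y - (k + 1 : ℤ) * p.η - p.s⌋, ?_⟩
    simp only [tx, ty, S]
    have h0 := Int.fract_nonneg (y - (k + 1 : ℤ) * p.η - p.s)
    have h1 := Int.fract_lt_one (y - (k + 1 : ℤ) * p.η - p.s)
    have h3 : 1 + p.s + (k + 1 : ℤ) * p.η + ⌊y - (k + 1 : ℤ) * p.η - p.s⌋ - y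
      = 1 - Int.fract (y - (k + 1 : ℤ) * p.η - p.s) := by
      rw [Int.fract]; ring
    rw [C_eq, B, floor_s] at h
    rw [B, floor_s] at hk'
    simp only [if_true, h3]
    push Not at h
    refine ⟨?_, ?_, ?_, ?_⟩ <;> linarith

theorem strict (p : Par) {x y : ℝ} {b : Bool} {k n : ℤ} (h : p.So (p.tx b k n x) (p.ty b k n y)) :
    (b = false ∧ n = ⌊y - k * p.η⌋ ∧ p.B y k < x ∧ x < p.C y k) ∨
    (b = true ∧ n = ⌊y - k * p.η - p.s⌋ ∧ p.C y (k - 1) < x ∧ x < p.B y k) := by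
  obtain ⟨h1, h2, h3, h4⟩ := h
  cases b
  · left
    simp only [tx, ty, Bool.false_eq_true, if_false] at h1 h2 h3 h4
    have hn : ⌊y - k * p.η⌋ = n := by
      rw [Int.floor_eq_iff]; constructor <;> linarith
    refine ⟨rfl, hn.symm, ?_, ?_⟩
    · rw [B, hn]; linarith
    · rw [C, B, Int.fract, hn]; linarith
  · right
    simp only [tx, ty, if_true] at h1 h2 h3 h4
    have hn : ⌊y - k * p.η - p.s⌋ = n := by
      rw [Int.floor_eq_iff]; constructor <;> linarith
    refine ⟨rfl, hn.symm, ?_, ?_⟩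
    · rw [C_eq, B, floor_s, sub_add_cancel, Int.fract, hn]
      have : 1 - (y - k * p.η - p.s - n) = 1 + p.s + k * p.η + n - y := by ring
      rw [this]; linarith
    · rw [B, floor_s, hn]; linarith

theorem disj (p : Par) {x y : ℝ} {b b' : Bool} {k n k' n' : ℤ}
    (h : p.So (p.tx b k n x) (p.ty b k n y)) (h' : p.So (p.tx b' k' n' x) (p.ty b' k' n' y)) :
    b = b' ∧ k = k' ∧ n = n' := by
  obtain ⟨m, hm, hf⟩ := p.f_lower
  have hBC : ∀ k, p.B y k < p.C y k := fun k => by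
    have := hf _ (Int.fract_nonneg (y - k * p.η)) (Int.fract_lt_one _).le
    rw [C]; linarith
  have hCB : ∀ k, p.C y k < p.B y (k + 1) := fun k => by
    have := hf (1 - Int.fract (y - (k + 1 : ℤ) * p.η - p.s))
      (by linarith [Int.fract_lt_one (y - (k + 1 : ℤ) * p.η - p.s)])
      (by linarith [Int.fract_nonneg (y - (k + 1 : ℤ) * p.η - p.s)])
    rw [C_eq]; linarith
  have hB : Monotone (p.B y) := monotone_int_of_le_succ fun n => ((hBC n).trans (hCB n)).le
  have hC : Monotone (p.C y) := monotone_int_of_le_succ fun n => ((hCB n).trans (hBC _)).le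
  have lt : ∀ {i j : ℤ}, p.B y i < p.B y j → i < j := fun h => by
    by_contra hh; exact absurd (hB (not_lt.mp hh)) (not_le.mpr h)
  have hCB' := hCB (k - 1)
  have hCB'' := hCB (k' - 1)
  have hBC' := hBC (k - 1)
  have hBC'' := hBC (k' - 1)
  rw [sub_add_cancel] at hCB' hCB''
  rcases p.strict h with ⟨rfl, hn, h1, h2⟩ | ⟨rfl, hn, h1, h2⟩ <;>
  rcases p.strict h' with ⟨rfl, hn', h1', h2'⟩ | ⟨rfl, hn', h1', h2'⟩
  · have l1 := lt (h1.trans (h2'.trans (hCB _)))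
    have l2 := lt (h1'.trans (h2.trans (hCB _)))
    obtain rfl : k = k' := by omega
    exact ⟨rfl, rfl, by rw [hn, hn']⟩
  · exfalso
    have l1 := lt (h1.trans h2')
    have l2 := lt (hBC''.trans (h1'.trans (h2.trans (hCB _))))
    obtain rfl : k = k' - 1 := by omega
    linarith
  · exfalso
    have l1 := lt (h1'.trans h2)
    have l2 := lt (hBC'.trans (h1.trans (h2'.trans (hCB _))))
    obtain rfl : k' = k - 1 := by omega
    linarith
  · have l1 := lt (hBC'.trans (h1.trans h2'))
    have l2 := lt (hBC''.trans (h1'.trans h2))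
    obtain rfl : k = k' := by omega
    exact ⟨rfl, rfl, by rw [hn, hn']⟩

end Par

theorem not_edgeToEdge {T : Set (Set Plane)} {t s : Set Plane} {x : Plane} (ht : t ∈ T) (hs : s ∈ T)
    (hx : IsVertexOf x t) (hxs : x ∈ s) (hx' : ¬ IsVertexOf x s) : ¬ IsEdgeToEdge T := by
  intro h
  have hne : t ≠ s := by rintro rfl; exact hx' hx
  have hxt : x ∈ t := hx.1
  rcases h t ht s hs hne with h | ⟨y, h, h1, h2⟩ | ⟨e, h, ⟨p, q, hpq, hp, hq, he, hf⟩, ⟨p', q', hpq', hp', hq', he', hf'⟩⟩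
  · have : x ∈ t ∩ s := ⟨hxt, hxs⟩
    rw [h] at this; exact this
  · have : x ∈ t ∩ s := ⟨hxt, hxs⟩
    rw [h] at this
    rw [Set.mem_singleton_iff] at this
    rw [this] at hx'
    exact hx' h2
  · have hxe : x ∈ e := by rw [← h]; exact ⟨hxt, hxs⟩
    have het : e ⊆ t := by rw [← h]; exact Set.inter_subset_left
    have hp't : p' ∈ t := het (by rw [he']; exact left_mem_segment ℝ _ _)
    have hq't : q' ∈ t := het (by rw [he']; exact right_mem_segment ℝ _ _)
    rw [he'] at hxe
    rcases (mem_extremePoints_iff_forall_segment.1 hx).2 p' hp't q' hq't hxe with h | h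
    · rw [← h] at hx'; exact hx' hp'
    · rw [← h] at hx'; exact hx' hq'

theorem interior_dir {t : Set Plane} {q : Plane} (hq : q ∈ interior t) (v : Plane) :
    ∃ ε > (0:ℝ), q + ε • v ∈ t := by
  have hc : Filter.Tendsto (fun ε : ℝ => q + ε • v) (nhdsWithin 0 (Set.Ioi 0)) (nhds q) := by
    have : Continuous (fun ε : ℝ => q + ε • v) := by fun_prop
    have h := this.tendsto 0
    simp only [zero_smul, add_zero] at h
    exact h.mono_left nhdsWithin_le_nhds
  have h1 := hc.eventually (mem_interior_iff_mem_nhds.1 hq)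
  have h2 := self_mem_nhdsWithin (a := (0:ℝ)) (s := Set.Ioi 0)
  obtain ⟨ε, h⟩ := (h1.and h2).exists
  exact ⟨ε, h.2, h.1⟩

namespace Par

variable (p : Par) (O u w : Plane)

def Φ (O u w : Plane) (x y : ℝ) : Plane := O + x • u + y • w

def tile (b : Bool) (k n : ℤ) : Set Plane :=
  {q | ∃ x y, q = Φ O u w x y ∧ p.S (p.tx b k n x) (p.ty b k n y)}

def base : Set Plane := {q | ∃ x y, q = Φ O u w x y ∧ p.S x y}

def Inj (O u w : Plane) : Prop := ∀ x y x' y', Φ O u w x y = Φ O u w x' y' → x = x' ∧ y = y'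
def Surj (O u w : Plane) : Prop := ∀ q, ∃ x y, q = Φ O u w x y

theorem tile_isom (b : Bool) (k n : ℤ) : IsIsometricCopy (p.tile O u w b k n) (p.base O u w) := by
  cases b
  · refine ⟨IsometryEquiv.addRight ((k * p.X + n * p.δ) • u + (k * p.η + n) • w), ?_⟩
    ext q
    simp only [tile, base, Set.mem_image, Set.mem_ofPred_eq, IsometryEquiv.addRight_apply]
    constructor
    · rintro ⟨x, y, rfl, h⟩
      refine ⟨_, ⟨_, _, rfl, h⟩, ?_⟩
      simp only [tx, ty, Φ, Bool.false_eq_true, if_false]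
      module
    · rintro ⟨_, ⟨x, y, rfl, h⟩, rfl⟩
      refine ⟨x + k * p.X + n * p.δ, y + k * p.η + n, ?_, ?_⟩
      · simp only [Φ]; module
      · simp only [tx, ty, Bool.false_eq_true, if_false]
        convert h using 1 <;> ring
  · refine ⟨IsometryEquiv.subLeft (O + O + (k * p.X + n * p.δ) • u + (1 + p.s + k * p.η + n) • w), ?_⟩
    ext q
    simp only [tile, base, Set.mem_image, Set.mem_ofPred_eq, IsometryEquiv.subLeft_apply]
    constructor
    · rintro ⟨x, y, rfl, h⟩
      refine ⟨_, ⟨_, _, rfl, h⟩, ?_⟩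
      simp only [tx, ty, Φ, if_true]
      module
    · rintro ⟨_, ⟨x, y, rfl, h⟩, rfl⟩
      refine ⟨k * p.X + n * p.δ - x, 1 + p.s + k * p.η + n - y, ?_, ?_⟩
      · simp only [Φ]; module
      · simp only [tx, ty, if_true]
        convert h using 1 <;> ring

variable {O u w}

theorem mem_tile (hi : Inj O u w) (b : Bool) (k n : ℤ) (x y : ℝ) :
    Φ O u w x y ∈ p.tile O u w b k n ↔ p.S (p.tx b k n x) (p.ty b k n y) := by
  constructor
  · rintro ⟨x', y', h, h'⟩
    obtain ⟨rfl, rfl⟩ := hi _ _ _ _ h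
    exact h'
  · intro h; exact ⟨x, y, rfl, h⟩

theorem interior_tile (hi : Inj O u w) (b : Bool) (k n : ℤ) (x y : ℝ)
    (h : Φ O u w x y ∈ interior (p.tile O u w b k n)) : p.So (p.tx b k n x) (p.ty b k n y) := by
  obtain ⟨e1, he1, h1⟩ := interior_dir h u
  obtain ⟨e2, he2, h2⟩ := interior_dir h (-u)
  obtain ⟨e3, he3, h3⟩ := interior_dir h w
  obtain ⟨e4, he4, h4⟩ := interior_dir h (-w)
  have k1 : Φ O u w x y + e1 • u = Φ O u w (x + e1) y := by simp only [Φ]; module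
  have k2 : Φ O u w x y + e2 • (-u) = Φ O u w (x - e2) y := by simp only [Φ]; module
  have k3 : Φ O u w x y + e3 • w = Φ O u w x (y + e3) := by simp only [Φ]; module
  have k4 : Φ O u w x y + e4 • (-w) = Φ O u w x (y - e4) := by simp only [Φ]; module
  rw [k1, mem_tile p hi] at h1
  rw [k2, mem_tile p hi] at h2
  rw [k3, mem_tile p hi] at h3
  rw [k4, mem_tile p hi] at h4
  cases b <;> simp only [tx, ty, Bool.false_eq_true, if_false, if_true, S, So] at h1 h2 h3 h4 ⊢
  · refine ⟨?_, ?_, ?_, ?_⟩ <;> linarith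
  · refine ⟨?_, ?_, ?_, ?_⟩ <;> linarith

theorem vertex_tile (hi : Inj O u w) (b : Bool) (k n : ℤ) (x y : ℝ)
    (hx : p.tx b k n x = 0) (hy : p.ty b k n y = 0 ∨ p.ty b k n y = 1)
    (hf : 0 ≤ p.f (p.ty b k n y)) :
    IsVertexOf (Φ O u w x y) (p.tile O u w b k n) := by
  rw [IsVertexOf, mem_extremePoints]
  constructor
  · rw [mem_tile p hi, hx]
    rcases hy with h | h <;> rw [h] at hf ⊢ <;> refine ⟨?_, ?_, ?_, ?_⟩ <;> linarith
  · rintro _ ⟨x1, y1, rfl, h1⟩ _ ⟨x2, y2, rfl, h2⟩ ⟨a, c, ha, hc, hac, h⟩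
    have e : a • Φ O u w x1 y1 + c • Φ O u w x2 y2 = Φ O u w (a * x1 + c * x2) (a * y1 + c * y2) := by
      have : O = (a + c) • O := by rw [hac, one_smul]
      simp only [Φ]
      rw [show O + (a * x1 + c * x2) • u + (a * y1 + c * y2) • w
        = (a + c) • O + (a * x1 + c * x2) • u + (a * y1 + c * y2) • w by rw [← this]]
      module
    rw [e] at h
    obtain ⟨hX, hY⟩ := hi _ _ _ _ h
    have aff1 : a * p.tx b k n x1 + c * p.tx b k n x2 = p.tx b k n x := by
      obtain rfl : c = 1 - a := by linarith
      rw [← hX]; cases b <;> simp only [tx, Bool.false_eq_true, if_false, if_true] <;> ring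
    have aff2 : a * p.ty b k n y1 + c * p.ty b k n y2 = p.ty b k n y := by
      obtain rfl : c = 1 - a := by linarith
      rw [← hY]; cases b <;> simp only [ty, Bool.false_eq_true, if_false, if_true] <;> ring
    obtain ⟨a1, a2, a3, a4⟩ := h1
    obtain ⟨b1, b2, b3, b4⟩ := h2
    have q1 : p.tx b k n x1 = p.tx b k n x := by
      have := mul_nonneg ha.le a3
      have := mul_nonneg hc.le b3
      have h0 : a * p.tx b k n x1 = 0 := by linarith
      rw [hx]; exact (mul_eq_zero.1 h0).resolve_left ha.ne'
    have q2 : p.tx b k n x2 = p.tx b k n x := by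
      have := mul_nonneg ha.le a3
      have := mul_nonneg hc.le b3
      have h0 : c * p.tx b k n x2 = 0 := by linarith
      rw [hx]; exact (mul_eq_zero.1 h0).resolve_left hc.ne'
    have q34 : p.ty b k n y1 = p.ty b k n y ∧ p.ty b k n y2 = p.ty b k n y := by
      rcases hy with hy | hy
      · have := mul_nonneg ha.le a1
        have := mul_nonneg hc.le b1
        have h0 : a * p.ty b k n y1 = 0 := by linarith
        have h0' : c * p.ty b k n y2 = 0 := by linarith
        rw [hy]
        exact ⟨(mul_eq_zero.1 h0).resolve_left ha.ne', (mul_eq_zero.1 h0').resolve_left hc.ne'⟩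
      · have := mul_nonneg ha.le (sub_nonneg.2 a2)
        have := mul_nonneg hc.le (sub_nonneg.2 b2)
        have h0 : a * (1 - p.ty b k n y1) = 0 := by linarith
        have h0' : c * (1 - p.ty b k n y2) = 0 := by linarith
        rw [hy]
        have r1 := (mul_eq_zero.1 h0).resolve_left ha.ne'
        have r2 := (mul_eq_zero.1 h0').resolve_left hc.ne'
        constructor <;> linarith
    obtain ⟨q3, q4⟩ := q34
    have injx : ∀ {i j}, p.tx b k n i = p.tx b k n j → i = j := by
      intro i j; cases b <;> simp only [tx, Bool.false_eq_true, if_false, if_true] <;> intro h <;> linarith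
    have injy : ∀ {i j}, p.ty b k n i = p.ty b k n j → i = j := by
      intro i j; cases b <;> simp only [ty, Bool.false_eq_true, if_false, if_true] <;> intro h <;> linarith
    rw [injx q1, injx q2, injy q3, injy q4]
    exact ⟨rfl, rfl⟩

theorem not_vertex_tile (hi : Inj O u w) (b : Bool) (k n : ℤ) (x y d e : ℝ)
    (hde : d ≠ 0 ∨ e ≠ 0)
    (h1 : p.S (p.tx b k n (x - d)) (p.ty b k n (y - e)))
    (h2 : p.S (p.tx b k n (x + d)) (p.ty b k n (y + e))) :
    ¬ IsVertexOf (Φ O u w x y) (p.tile O u w b k n) := by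
  intro h
  have h3 := (mem_extremePoints.1 h).2 _ ((mem_tile p hi _ _ _ _ _).2 h1) _ ((mem_tile p hi _ _ _ _ _).2 h2)
    ⟨1/2, 1/2, by norm_num, by norm_num, by norm_num, by simp only [Φ]; module⟩
  obtain ⟨h4, h5⟩ := hi _ _ _ _ h3.1
  rcases hde with h | h <;> apply h <;> linarith

theorem f_zero : p.f 0 = p.c := by rw [f_left p p.hy0.le]; ring
theorem f_one : p.f 1 = 1 := by rw [f_right p p.hy1.le]; ring

theorem main (hi : Inj O u w) (hsu : Surj O u w) (hs' : 1 - p.c = 0 → p.s = 1 / 2) :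
    ∃ T : Set (Set Plane), IsMonohedralTiling (p.base O u w) T ∧ ¬ IsEdgeToEdge T := by
  refine ⟨{t | ∃ b k n, t = p.tile O u w b k n}, ⟨?_, ?_, ?_⟩, ?_⟩
  · rintro _ ⟨b, k, n, rfl⟩
    exact p.tile_isom O u w b k n
  · rw [Set.eq_univ_iff_forall]
    intro q
    obtain ⟨x, y, rfl⟩ := hsu q
    obtain ⟨b, k, n, h⟩ := p.cover x y
    exact ⟨_, ⟨b, k, n, rfl⟩, (p.mem_tile hi _ _ _ _ _).2 h⟩
  · rintro _ ⟨b, k, n, rfl⟩ _ ⟨b', k', n', rfl⟩ hne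
    rw [← Set.not_nonempty_iff_eq_empty]
    rintro ⟨q, h1, h2⟩
    obtain ⟨x, y, rfl⟩ := hsu q
    obtain ⟨rfl, rfl, rfl⟩ := p.disj (p.interior_tile hi _ _ _ _ _ h1) (p.interior_tile hi _ _ _ _ _ h2)
    exact hne rfl
  · have hc := p.hc
    have f0 := p.f_zero
    have f1 := p.f_one
    rcases lt_trichotomy (1 - p.c) 0 with hd | hd | hd
    · have t0 : p.ty false 0 (-1) 0 = 1 := by simp [ty]
      refine not_edgeToEdge (t := p.tile O u w false 0 (-1)) (s := p.tile O u w false 0 0)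
        (x := Φ O u w (-p.δ) 0) ⟨_, _, _, rfl⟩ ⟨_, _, _, rfl⟩
        (p.vertex_tile hi _ _ _ _ _ (by simp [tx]) (Or.inr t0) (by rw [t0, f1]; norm_num)) ?_ ?_
      · rw [mem_tile p hi]
        simp [tx, ty, S, f0, δ]; linarith
      · have m1 := min_le_left (p.c - 1) 1
        have m2 := min_le_right (p.c - 1) 1
        have m3 : 0 < min (p.c - 1) 1 := lt_min (by linarith) one_pos
        apply p.not_vertex_tile hi _ _ _ _ _ (min (p.c - 1) 1) 0 (Or.inl m3.ne')
        · simp only [tx, ty, S, Bool.false_eq_true, if_false, Int.cast_zero, zero_mul, sub_zero, f0, δ]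
          refine ⟨?_, ?_, ?_, ?_⟩ <;> linarith
        · simp only [tx, ty, S, Bool.false_eq_true, if_false, Int.cast_zero, zero_mul, sub_zero, add_zero, f0, δ]
          refine ⟨?_, ?_, ?_, ?_⟩ <;> linarith
    · have hs := hs' hd
      have t0 : p.ty true 0 0 (1/2) = 1 := by simp [ty, hs]
      refine not_edgeToEdge (t := p.tile O u w true 0 0) (s := p.tile O u w false 0 0)
        (x := Φ O u w 0 (1/2)) ⟨_, _, _, rfl⟩ ⟨_, _, _, rfl⟩
        (p.vertex_tile hi _ _ _ _ _ (by simp [tx]) (Or.inr t0) (by rw [t0, f1]; norm_num)) ?_ ?_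
      · obtain ⟨m, hm, hf⟩ := p.f_lower
        have := hf (1/2) (by norm_num) (by norm_num)
        rw [mem_tile p hi]
        simp only [tx, ty, S, Bool.false_eq_true, if_false, Int.cast_zero, zero_mul, sub_zero]
        refine ⟨?_, ?_, ?_, ?_⟩ <;> linarith
      · apply p.not_vertex_tile hi _ _ _ _ _ 0 (1/2) (Or.inr (by norm_num))
        · simp only [tx, ty, S, Bool.false_eq_true, if_false, Int.cast_zero, zero_mul, sub_zero, sub_self, f0]
          refine ⟨?_, ?_, ?_, ?_⟩ <;> linarith
        · simp only [tx, ty, S, Bool.false_eq_true, if_false, Int.cast_zero, zero_mul, sub_zero, add_zero, add_halves, f1]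
          refine ⟨?_, ?_, ?_, ?_⟩ <;> linarith
    · have t0 : p.ty false 0 0 0 = 0 := by simp [ty]
      refine not_edgeToEdge (t := p.tile O u w false 0 0) (s := p.tile O u w false 0 (-1))
        (x := Φ O u w 0 0) ⟨_, _, _, rfl⟩ ⟨_, _, _, rfl⟩
        (p.vertex_tile hi _ _ _ _ _ (by simp [tx]) (Or.inl t0) (by rw [t0, f0]; exact hc.le)) ?_ ?_
      · rw [mem_tile p hi]
        simp [tx, ty, S, f1, δ]; constructor <;> linarith
      · have m1 := min_le_left (1 - p.c) p.c
        have m2 := min_le_right (1 - p.c) p.c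
        have m3 : 0 < min (1 - p.c) p.c := lt_min hd hc
        apply p.not_vertex_tile hi _ _ _ _ _ (min (1 - p.c) p.c) 0 (Or.inl m3.ne')
        · simp only [tx, ty, S, Bool.false_eq_true, if_false, Int.cast_zero, zero_mul, sub_zero, zero_sub, Int.cast_neg, Int.cast_one, sub_neg_eq_add, zero_add, f1, δ]
          refine ⟨?_, ?_, ?_, ?_⟩ <;> linarith
        · simp only [tx, ty, S, Bool.false_eq_true, if_false, Int.cast_zero, zero_mul, sub_zero, add_zero, zero_sub, Int.cast_neg, Int.cast_one, sub_neg_eq_add, zero_add, f1, δ]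
          refine ⟨?_, ?_, ?_, ?_⟩ <;> linarith

end Par

namespace Par

theorem Φ_comb (O u w : Plane) (a c x1 y1 x2 y2 : ℝ) (hac : a + c = 1) :
    a • Φ O u w x1 y1 + c • Φ O u w x2 y2 = Φ O u w (a * x1 + c * x2) (a * y1 + c * y2) := by
  obtain rfl : c = 1 - a := by linarith
  simp only [Φ]
  module

theorem hull_eq (p : Par) (O u w : Plane) (V : Fin 5 → Plane) (h3 : V 3 = Φ O u w 0 0)
    (h4 : V 4 = Φ O u w 0 1) (h0 : V 0 = Φ O u w 1 1) (h2 : V 2 = Φ O u w p.c 0)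
    (h1 : V 1 = Φ O u w (p.c + p.α * p.y0) p.y0) :
    convexHull ℝ (Set.range V) = p.base O u w := by
  have hy0 := p.hy0
  have hy1 := p.hy1
  have hc := p.hc
  have hx := p.hx
  have hf1 := p.f_one
  have hf0 := p.f_zero
  obtain ⟨m, hm, hf⟩ := p.f_lower
  apply Set.Subset.antisymm
  · apply convexHull_min
    · rintro _ ⟨i, rfl⟩
      fin_cases i
      · exact ⟨_, _, h0, by norm_num, by norm_num, by norm_num, by rw [hf1]⟩
      · refine ⟨_, _, h1, hy0.le, hy1.le, ?_, ?_⟩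
        · have := hf p.y0 hy0.le hy1.le
          rw [f_left p le_rfl] at this; linarith
        · rw [f_left p le_rfl]
      · exact ⟨_, _, h2, by norm_num, by norm_num, hc.le, by rw [hf0]⟩
      · exact ⟨_, _, h3, by norm_num, by norm_num, by norm_num, by rw [hf0]; exact hc.le⟩
      · exact ⟨_, _, h4, by norm_num, by norm_num, by norm_num, by rw [hf1]; norm_num⟩
    · rintro _ ⟨x1, y1, rfl, a1, a2, a3, a4⟩ _ ⟨x2, y2, rfl, b1, b2, b3, b4⟩ a b ha hb hab
      refine ⟨_, _, Φ_comb _ _ _ _ _ _ _ _ _ hab, ?_, ?_, ?_, ?_⟩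
      · positivity
      · nlinarith
      · positivity
      · rw [f, le_min_iff] at a4 b4 ⊢
        obtain ⟨a4, a5⟩ := a4
        obtain ⟨b4, b5⟩ := b4
        obtain rfl : b = 1 - a := by linarith
        constructor
        · nlinarith [mul_le_mul_of_nonneg_left a4 ha, mul_le_mul_of_nonneg_left b4 hb]
        · nlinarith [mul_le_mul_of_nonneg_left a5 ha, mul_le_mul_of_nonneg_left b5 hb]
  · rintro _ ⟨x, y, rfl, a1, a2, a3, a4⟩
    have hK := convex_convexHull ℝ (Set.range V)
    have hV : ∀ i, V i ∈ convexHull ℝ (Set.range V) := fun i =>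
      subset_convexHull ℝ _ ⟨i, rfl⟩
    set K := convexHull ℝ (Set.range V)
    have comb : ∀ x1 y1 x2 y2 t x y : ℝ, Φ O u w x1 y1 ∈ K → Φ O u w x2 y2 ∈ K → 0 ≤ t → t ≤ 1 →
        x = (1 - t) * x1 + t * x2 → y = (1 - t) * y1 + t * y2 → Φ O u w x y ∈ K := by
      rintro x1 y1 x2 y2 t x y k1 k2 t0 t1 rfl rfl
      rw [← Φ_comb _ _ _ _ _ _ _ _ _ (by ring)]
      exact hK k1 k2 (by linarith) t0 (by ring)
    have v0 := hV 0
    have v1 := hV 1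
    have v2 := hV 2
    have v3 := hV 3
    have v4 := hV 4
    rw [h0] at v0
    rw [h1] at v1
    rw [h2] at v2
    rw [h3] at v3
    rw [h4] at v4
    have hl : Φ O u w 0 y ∈ K := comb _ _ _ _ y _ _ v3 v4 a1 a2 (by ring) (by ring)
    have hr : Φ O u w (p.f y) y ∈ K := by
      rcases le_total y p.y0 with h | h
      · rw [f_left p h]
        refine comb _ _ _ _ (y / p.y0) _ _ v2 v1 (by positivity) ((div_le_one hy0).2 h) ?_ ?_
        · field_simp; ring
        · field_simp; ring
      · rw [f_right p h]
        have : 0 < 1 - p.y0 := by linarith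
        refine comb _ _ _ _ ((y - p.y0) / (1 - p.y0)) _ _ v1 v0 (div_nonneg (by linarith) this.le)
          ((div_le_one this).2 (by linarith)) ?_ ?_
        · rw [hx]; field_simp; ring
        · field_simp; ring
    have hfy : 0 < p.f y := hm.trans_le (hf y a1 a2)
    refine comb _ _ _ _ (x / p.f y) _ _ hl hr (by positivity) ((div_le_one hfy).2 a4) ?_ ?_
    · field_simp; ring
    · ring

end Par

def cr (p q : Plane) : ℝ := p 0 * q 1 - p 1 * q 0
def D3 (p q r : Plane) : ℝ := cr (q - p) (r - p)

theorem cr_zero {p q : Plane} (hp : p ≠ 0) (h : cr p q = 0) : ∃ t : ℝ, q = t • p := by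
  unfold cr at h
  by_cases h0 : p 0 = 0
  · have h1 : p 1 ≠ 0 := by
      intro h1; apply hp; ext i; fin_cases i <;> simp [h0, h1]
    refine ⟨q 1 / p 1, ?_⟩
    rw [h0] at h
    have : q 0 = 0 := by
      have : p 1 * q 0 = 0 := by linarith
      exact (mul_eq_zero.1 this).resolve_left h1
    ext i; fin_cases i <;> simp [h0, h1, this]
  · refine ⟨q 0 / p 0, ?_⟩
    ext i; fin_cases i
    · simp [h0]
    · simp; field_simp; linarith

/-- the decomposition of a vector in a basis -/
theorem cr_decomp (u w q : Plane) (h : cr u w ≠ 0) :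
    q = (cr q w / cr u w) • u + (cr u q / cr u w) • w := by
  ext i; fin_cases i
  · simp; field_simp; simp only [cr]; ring
  · simp; field_simp; simp only [cr]; ring

theorem V_ne (P : ConvexPentagon) {i j : Fin 5} (h : i ≠ j) : P.V i ≠ P.V j := by
  intro he
  apply P.strictlyConvex i
  rw [he]
  exact subset_convexHull ℝ _ ⟨j, h.symm, rfl⟩

theorem V_not_wbtw (P : ConvexPentagon) {i j k : Fin 5} (hij : i ≠ j) (hik : i ≠ k) :
    ¬ Wbtw ℝ (P.V j) (P.V i) (P.V k) := by
  intro h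
  apply P.strictlyConvex i
  rw [← mem_segment_iff_wbtw] at h
  have h1 : P.V j ∈ convexHull ℝ (P.V '' {j | j ≠ i}) := subset_convexHull ℝ _ ⟨j, hij.symm, rfl⟩
  have h2 : P.V k ∈ convexHull ℝ (P.V '' {j | j ≠ i}) := subset_convexHull ℝ _ ⟨k, hik.symm, rfl⟩
  exact (convex_convexHull ℝ _).segment_subset h1 h2 h

theorem D3_ne (P : ConvexPentagon) {i j k : Fin 5} (hij : i ≠ j) (hik : i ≠ k) (hjk : j ≠ k) :
    D3 (P.V i) (P.V j) (P.V k) ≠ 0 := by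
  intro h
  obtain ⟨t, ht⟩ := cr_zero (sub_ne_zero.2 (V_ne P hij.symm)) h
  have hcol : Collinear ℝ {P.V i, P.V j, P.V k} := by
    rw [collinear_iff_of_mem (p₀ := P.V i) (by simp)]
    refine ⟨P.V j - P.V i, ?_⟩
    intro q hq
    simp only [Set.mem_insert_iff, Set.mem_singleton_iff] at hq
    rcases hq with rfl | rfl | rfl
    · exact ⟨0, by simp⟩
    · exact ⟨1, by simp⟩
    · exact ⟨t, by rw [← ht]; simp⟩
  rcases hcol.wbtw_or_wbtw_or_wbtw with h | h | h
  · exact V_not_wbtw P hij.symm hjk h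
  · exact V_not_wbtw P hjk.symm hik.symm h
  · exact V_not_wbtw P hik hij h

theorem half_nbhd (K : Set Plane) (hK : Convex ℝ K) (a b q z : Plane) (ha : a ∈ K) (hb : b ∈ K)
    (hq : q ∈ K) (hD : D3 a b q ≠ 0)
    (t : ℝ) (ht : t = cr (b - a) (z - midpoint ℝ a b) / cr (b - a) (q - midpoint ℝ a b))
    (ht0 : 0 ≤ t) (ht1 : t < 1 / 2)
    (s : ℝ) (hs : s = cr (z - midpoint ℝ a b) (q - midpoint ℝ a b) / cr (b - a) (q - midpoint ℝ a b))
    (hs1 : |s| < 1 / 4) : z ∈ K := by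
  have hm : midpoint ℝ a b = (1/2 : ℝ) • a + (1/2 : ℝ) • b := by
    rw [midpoint_eq_smul_add]; simp
  have hcr : cr (b - a) (q - midpoint ℝ a b) = D3 a b q := by
    rw [hm]; simp [cr, D3]; ring
  have hne : cr (b - a) (q - midpoint ℝ a b) ≠ 0 := by rwa [hcr]
  have hdec := cr_decomp (b - a) (q - midpoint ℝ a b) (z - midpoint ℝ a b) hne
  rw [← ht, ← hs, hm] at hdec
  have hz : z = (1 - t) • ((1/2 - s / (1 - t)) • a + (1/2 + s / (1 - t)) • b) + t • q := by
    have h1 : 1 - t ≠ 0 := by linarith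
    have : z = (1/2 : ℝ) • a + (1/2 : ℝ) • b + (s • (b - a) + t • (q - ((1/2 : ℝ) • a + (1/2 : ℝ) • b))) := by
      rw [← hdec]; abel
    rw [this]
    match_scalars <;> field_simp <;> ring
  rw [hz]
  have h1 : 0 < 1 - t := by linarith
  have hs2 := abs_lt.1 hs1
  have h3 : s / (1 - t) ≤ 1 / 2 := by rw [div_le_iff₀ h1]; linarith
  have h4 : -(1 / 2) ≤ s / (1 - t) := by rw [le_div_iff₀ h1]; linarith
  exact hK (hK ha hb (by linarith) (by linarith) (by ring)) hq h1.le ht0 (by ring)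

theorem mid_interior (K : Set Plane) (hK : Convex ℝ K) (a b q r : Plane) (ha : a ∈ K) (hb : b ∈ K)
    (hq : q ∈ K) (hr : r ∈ K) (h1 : 0 < D3 a b q) (h2 : D3 a b r < 0) :
    midpoint ℝ a b ∈ interior K := by
  have hm : midpoint ℝ a b = (1/2 : ℝ) • a + (1/2 : ℝ) • b := by
    rw [midpoint_eq_smul_add]; simp
  have hcr : ∀ q, cr (b - a) (q - midpoint ℝ a b) = D3 a b q := by
    intro q; rw [hm]; simp [cr, D3]; ring
  let T : Plane → Plane → ℝ := fun q z =>
    cr (b - a) (z - midpoint ℝ a b) / cr (b - a) (q - midpoint ℝ a b)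
  let S : Plane → Plane → ℝ := fun q z =>
    cr (z - midpoint ℝ a b) (q - midpoint ℝ a b) / cr (b - a) (q - midpoint ℝ a b)
  have hT : ∀ q, Continuous (T q) := fun q => by simp only [T, cr]; fun_prop
  have hS : ∀ q, Continuous (S q) := fun q => by simp only [S, cr]; fun_prop
  rw [mem_interior]
  refine ⟨{z | T q z < 1/2} ∩ {z | |S q z| < 1/4} ∩ ({z | T r z < 1/2} ∩ {z | |S r z| < 1/4}), ?_, ?_, ?_⟩
  · rintro z ⟨⟨z1, z2⟩, z3, z4⟩
    rcases le_total 0 (cr (b - a) (z - midpoint ℝ a b)) with h | h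
    · exact half_nbhd K hK a b q z ha hb hq h1.ne' _ rfl
        (div_nonneg h (by rw [hcr]; exact h1.le)) z1 _ rfl z2
    · exact half_nbhd K hK a b r z ha hb hr h2.ne _ rfl
        (div_nonneg_of_nonpos h (by rw [hcr]; exact h2.le)) z3 _ rfl z4
  · exact ((isOpen_lt (hT q) continuous_const).inter (isOpen_lt (hS q).abs continuous_const)).inter
      ((isOpen_lt (hT r) continuous_const).inter (isOpen_lt (hS r).abs continuous_const))
  · simp [T, S, cr]

theorem same_side (P : ConvexPentagon) (i j k : Fin 5) (h1 : 0 < D3 (P.V i) (P.V (i+1)) (P.V j))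
    (h2 : D3 (P.V i) (P.V (i+1)) (P.V k) < 0) : False := by
  have h := P.cyclic i (midpoint_mem_segment (𝕜 := ℝ) (P.V i) (P.V (i+1)))
  have hV : ∀ i, P.V i ∈ convexHull ℝ (Set.range P.V) := fun i =>
      subset_convexHull ℝ _ ⟨i, rfl⟩
  exact h.2 (mid_interior _ (convex_convexHull ℝ _) _ _ _ _ (hV _) (hV _) (hV j) (hV k) h1 h2)

theorem D3_cyc (p q r : Plane) : D3 p q r = D3 q r p := by
  simp [D3, cr]; ring

theorem step (P : ConvexPentagon) (i : Fin 5) (h : 0 < D3 (P.V i) (P.V (i+1)) (P.V (i+2))) :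
    0 < D3 (P.V (i+1)) (P.V (i+2)) (P.V (i+3)) := by
  have hne := D3_ne P (i := i+1) (j := i+2) (k := i+3) (by simp) (by simp) (by simp)
  by_contra hlt
  have hlt := lt_of_le_of_ne (not_lt.1 hlt) hne
  rw [D3_cyc] at h
  have e : i + 2 = i + 1 + 1 := by rw [add_assoc]; rfl
  rw [e] at h hlt
  exact same_side P (i+1) _ _ h hlt

theorem step' (P : ConvexPentagon) (i : Fin 5) (h : D3 (P.V i) (P.V (i+1)) (P.V (i+2)) < 0) :
    D3 (P.V (i+1)) (P.V (i+2)) (P.V (i+3)) < 0 := by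
  have hne := D3_ne P (i := i+1) (j := i+2) (k := i+3) (by simp) (by simp) (by simp)
  by_contra hlt
  have hlt := lt_of_le_of_ne (not_lt.1 hlt) hne.symm
  rw [D3_cyc] at h
  have e : i + 2 = i + 1 + 1 := by rw [add_assoc]; rfl
  rw [e] at h hlt
  exact same_side P (i+1) _ _ hlt h

theorem orient (P : ConvexPentagon) :
    (0 < D3 (P.V 0) (P.V 1) (P.V 2) ∧ 0 < D3 (P.V 1) (P.V 2) (P.V 3) ∧ 0 < D3 (P.V 2) (P.V 3) (P.V 4)
      ∧ 0 < D3 (P.V 3) (P.V 4) (P.V 0) ∧ 0 < D3 (P.V 4) (P.V 0) (P.V 1)) ∨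
    (D3 (P.V 0) (P.V 1) (P.V 2) < 0 ∧ D3 (P.V 1) (P.V 2) (P.V 3) < 0 ∧ D3 (P.V 2) (P.V 3) (P.V 4) < 0
      ∧ D3 (P.V 3) (P.V 4) (P.V 0) < 0 ∧ D3 (P.V 4) (P.V 0) (P.V 1) < 0) := by
  have hne := D3_ne P (i := 0) (j := 1) (k := 2) (by decide) (by decide) (by decide)
  rcases hne.lt_or_gt with h | h
  · right
    have h1 := step' P 0 h
    have h2 := step' P 1 h1
    have h3 := step' P 2 h2
    have h4 := step' P 3 h3
    exact ⟨h, h1, h2, h3, h4⟩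
  · left
    have h1 := step P 0 h
    have h2 := step P 1 h1
    have h3 := step P 2 h2
    have h4 := step P 3 h3
    exact ⟨h, h1, h2, h3, h4⟩

def toC : Plane ≃ₗᵢ[ℝ] ℂ := Complex.orthonormalBasisOneI.repr.symm

theorem toC_eq (p : Plane) : toC p = ⟨p 0, p 1⟩ := by
  apply Complex.orthonormalBasisOneI.repr.injective
  ext i
  simp [toC]
  fin_cases i <;> simp

theorem angle_pos {x y : Plane} (h : 0 < cr x y) :
    (toC x / toC y).arg = - InnerProductGeometry.angle x y := by
  have hx : toC x ≠ 0 := by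
    intro h0
    have : x = 0 := by simpa using h0
    simp [this, cr] at h
  have hy : toC y ≠ 0 := by
    intro h0
    have : y = 0 := by simpa using h0
    simp [this, cr] at h
  have e : InnerProductGeometry.angle x y = |(toC x / toC y).arg| := by
    rw [← Complex.angle_eq_abs_arg hx hy]
    exact (LinearIsometry.angle_map toC.toLinearIsometry x y).symm
  have him : (toC x / toC y).im < 0 := by
    rw [Complex.div_im, ← sub_div]
    apply div_neg_of_neg_of_pos
    · simp [toC_eq]; unfold cr at h; linarith
    · exact Complex.normSq_pos.2 hy
  rw [e, abs_of_neg (Complex.arg_neg_iff.2 him)]; ring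

theorem angle_neg {x y : Plane} (h : cr x y < 0) :
    (toC x / toC y).arg = InnerProductGeometry.angle x y := by
  have hx : toC x ≠ 0 := by
    intro h0
    have : x = 0 := by simpa using h0
    simp [this, cr] at h
  have hy : toC y ≠ 0 := by
    intro h0
    have : y = 0 := by simpa using h0
    simp [this, cr] at h
  have e : InnerProductGeometry.angle x y = |(toC x / toC y).arg| := by
    rw [← Complex.angle_eq_abs_arg hx hy]
    exact (LinearIsometry.angle_map toC.toLinearIsometry x y).symm
  have him : 0 ≤ (toC x / toC y).im := by
    rw [Complex.div_im, ← sub_div]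
    apply div_nonneg
    · simp [toC_eq]; unfold cr at h; linarith
    · exact Complex.normSq_nonneg _
  rw [e, abs_of_nonneg (Complex.arg_nonneg_iff.2 him)]

theorem prod_arg (r1 r2 r3 : ℂ) (h : r1.arg + r2.arg + r3.arg = 2 * Real.pi ∨
    r1.arg + r2.arg + r3.arg = - (2 * Real.pi)) : r1 * r2 * r3 = ((‖r1‖ * ‖r2‖ * ‖r3‖ : ℝ) : ℂ) := by
  conv_lhs => rw [← Complex.norm_mul_exp_arg_mul_I r1, ← Complex.norm_mul_exp_arg_mul_I r2,
    ← Complex.norm_mul_exp_arg_mul_I r3]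
  have e : Complex.exp (r1.arg * Complex.I) * Complex.exp (r2.arg * Complex.I) *
      Complex.exp (r3.arg * Complex.I) = 1 := by
    rw [← Complex.exp_add, ← Complex.exp_add, ← add_mul, ← add_mul, ← Complex.ofReal_add,
      ← Complex.ofReal_add]
    rcases h with h | h
    · rw [h]; push_cast; exact Complex.exp_two_pi_mul_I
    · rw [h]; push_cast; rw [neg_mul, Complex.exp_neg, Complex.exp_two_pi_mul_I, inv_one]
  push_cast
  linear_combination (‖r1‖ * ‖r2‖ * ‖r3‖ : ℂ) * e

theorem parallel (P : ConvexPentagon)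
    (hang : P.angle 0 + P.angle 1 + P.angle 2 = 2 * Real.pi) :
    ∃ c : ℝ, 0 < c ∧ P.V 2 - P.V 3 = c • (P.V 0 - P.V 4) := by
  have n1 := sub_ne_zero.2 (V_ne P (show (4 : Fin 5) ≠ 0 by decide))
  have n2 := sub_ne_zero.2 (V_ne P (show (1 : Fin 5) ≠ 0 by decide))
  have n3 := sub_ne_zero.2 (V_ne P (show (2 : Fin 5) ≠ 1 by decide))
  have n4 := sub_ne_zero.2 (V_ne P (show (3 : Fin 5) ≠ 2 by decide))
  have c1 : cr (P.V 4 - P.V 0) (P.V 1 - P.V 0) = - D3 (P.V 4) (P.V 0) (P.V 1) := by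
    simp [cr, D3]; ring
  have c2 : cr (P.V 0 - P.V 1) (P.V 2 - P.V 1) = - D3 (P.V 0) (P.V 1) (P.V 2) := by
    simp [cr, D3]; ring
  have c3 : cr (P.V 1 - P.V 2) (P.V 3 - P.V 2) = - D3 (P.V 1) (P.V 2) (P.V 3) := by
    simp [cr, D3]; ring
  have a0 : P.angle 0 = InnerProductGeometry.angle (P.V 4 - P.V 0) (P.V 1 - P.V 0) := rfl
  have a1 : P.angle 1 = InnerProductGeometry.angle (P.V 0 - P.V 1) (P.V 2 - P.V 1) := rfl
  have a2 : P.angle 2 = InnerProductGeometry.angle (P.V 1 - P.V 2) (P.V 3 - P.V 2) := rfl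
  rw [a0, a1, a2] at hang
  have key := prod_arg (toC (P.V 4 - P.V 0) / toC (P.V 1 - P.V 0))
    (toC (P.V 0 - P.V 1) / toC (P.V 2 - P.V 1)) (toC (P.V 1 - P.V 2) / toC (P.V 3 - P.V 2)) (by
    rcases orient P with ⟨h0, h1, h2, h3, h4⟩ | ⟨h0, h1, h2, h3, h4⟩
    · left
      rw [angle_neg (by rw [c1]; linarith), angle_neg (by rw [c2]; linarith),
        angle_neg (by rw [c3]; linarith), hang]
    · right
      rw [angle_pos (by rw [c1]; linarith), angle_pos (by rw [c2]; linarith),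
        angle_pos (by rw [c3]; linarith)]
      linarith)
  have nz : ∀ {x : Plane}, x ≠ 0 → toC x ≠ 0 := fun {x} hx h0 => hx (by simpa using h0)
  have s1 : toC (P.V 0 - P.V 1) = - toC (P.V 1 - P.V 0) := by rw [← map_neg, neg_sub]
  have s2 : toC (P.V 1 - P.V 2) = - toC (P.V 2 - P.V 1) := by rw [← map_neg, neg_sub]
  have m1 := nz n1
  have m2 := nz n2
  have m3 := nz n3
  have m4 := nz n4
  rw [s1, s2] at key
  have hR : 0 < ‖toC (P.V 4 - P.V 0) / toC (P.V 1 - P.V 0)‖ *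
    ‖-toC (P.V 1 - P.V 0) / toC (P.V 2 - P.V 1)‖ * ‖-toC (P.V 2 - P.V 1) / toC (P.V 3 - P.V 2)‖ := by
    have q1 := norm_pos_iff.2 (div_ne_zero m1 m2)
    have q2 := norm_pos_iff.2 (div_ne_zero (neg_ne_zero.2 m2) m3)
    have q3 := norm_pos_iff.2 (div_ne_zero (neg_ne_zero.2 m3) m4)
    positivity
  set R := ‖toC (P.V 4 - P.V 0) / toC (P.V 1 - P.V 0)‖ *
    ‖-toC (P.V 1 - P.V 0) / toC (P.V 2 - P.V 1)‖ * ‖-toC (P.V 2 - P.V 1) / toC (P.V 3 - P.V 2)‖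
  have key2 : toC (P.V 4 - P.V 0) = R * toC (P.V 3 - P.V 2) := by
    rw [← key]; field_simp
  have key3 : P.V 4 - P.V 0 = R • (P.V 3 - P.V 2) := by
    apply toC.injective
    rw [key2, map_smul, Complex.real_smul]
  refine ⟨R⁻¹, inv_pos.2 hR, ?_⟩
  have : P.V 0 - P.V 4 = R • (P.V 2 - P.V 3) := by
    rw [← neg_sub, key3, ← neg_sub (P.V 2), smul_neg, neg_neg]
  rw [this, smul_smul, inv_mul_cancel₀ hR.ne', one_smul]

open Par in
theorem exists_tiling (P : ConvexPentagon)
    (hang : P.angle 0 + P.angle 1 + P.angle 2 = 2 * Real.pi) :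
    ∃ T : Set (Set Plane), IsMonohedralTiling P.carrier T ∧ ¬ IsEdgeToEdge T := by
  obtain ⟨c, hc, hpar⟩ := parallel P hang
  obtain ⟨u, hu⟩ : ∃ u, u = P.V 0 - P.V 4 := ⟨_, rfl⟩
  obtain ⟨w, hw⟩ : ∃ w, w = P.V 4 - P.V 3 := ⟨_, rfl⟩
  obtain ⟨O, hO⟩ : ∃ O, O = P.V 3 := ⟨_, rfl⟩
  have hne : cr u w ≠ 0 := by
    have := D3_ne P (i := 3) (j := 4) (k := 0) (by decide) (by decide) (by decide)
    intro h
    apply this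
    rw [hu, hw] at h
    simp only [cr, D3, PiLp.sub_apply] at h ⊢
    linarith
  have hdec := fun q => cr_decomp u w q hne
  obtain ⟨x0, y0, hxy⟩ : ∃ x0 y0 : ℝ, P.V 1 - O = x0 • u + y0 • w := ⟨_, _, hdec _⟩
  have v3 : P.V 3 = Φ O u w 0 0 := by simp [Φ, hO]
  have v4 : P.V 4 = Φ O u w 0 1 := by simp [Φ, hO, hw]
  have v0 : P.V 0 = Φ O u w 1 1 := by simp only [Φ, hO, hw, hu]; module
  have v2 : P.V 2 = Φ O u w c 0 := by
    simp only [Φ, hO, hu, ← hpar]; simp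
  have v1 : P.V 1 = Φ O u w x0 y0 := by
    simp only [Φ]; rw [add_assoc, ← hxy]; simp
  have D_eq : ∀ x1 y1 x2 y2 x3 y3 : ℝ, D3 (Φ O u w x1 y1) (Φ O u w x2 y2) (Φ O u w x3 y3)
      = ((x2 - x1) * (y3 - y1) - (y2 - y1) * (x3 - x1)) * cr u w := by
    intros; simp [D3, cr, Φ]; ring
  obtain ⟨g1, g2, g3⟩ : 0 < y0 ∧ y0 < 1 ∧ c * (1 - y0) + y0 < x0 := by
    have ho := orient P
    rw [v0, v1, v2, v3, v4] at ho
    simp only [D_eq] at ho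
    rcases ho with ⟨h0, h1, h2, h3, h4⟩ | ⟨h0, h1, h2, h3, h4⟩
    · have hn : cr u w < 0 := by linarith
      refine ⟨?_, ?_, ?_⟩
      · have := neg_of_mul_pos_left h1 hn.le
        by_contra hh
        nlinarith
      · have := neg_of_mul_pos_left h4 hn.le
        linarith
      · have := neg_of_mul_pos_left h0 hn.le
        linarith
    · have hn : 0 < cr u w := by linarith
      refine ⟨?_, ?_, ?_⟩
      · have := neg_of_mul_neg_left h1 hn.le
        by_contra hh
        nlinarith
      · have := neg_of_mul_neg_left h4 hn.le
        linarith
      · have := neg_of_mul_neg_left h0 hn.le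
        linarith
  have g4 : 0 < 1 - y0 := by linarith
  let p : Par :=
    { c := c
      α := (x0 - c) / y0
      β := (x0 - 1) / (1 - y0)
      y0 := y0
      s := if 1 - c = 0 then 1 / 2 else 0
      hc := hc
      hy0 := g1
      hy1 := g2
      hαβ := by
        rw [div_add_div _ _ g1.ne' g4.ne']
        apply div_pos
        · nlinarith
        · positivity
      hx := by field_simp; ring
      hs := by
        by_cases h : 1 - c = 0
        · right; exact h
        · left; simp [h] }
  have hp1 : x0 = p.c + p.α * p.y0 := by simp only [p]; field_simp; ring
  have hull := p.hull_eq O u w P.V v3 v4 v0 v2 (by rw [v1, hp1])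
  unfold ConvexPolygon.carrier
  rw [hull]
  apply p.main
  · intro x y x' y' h
    have h0 : (x - x') • u + (y - y') • w = 0 := by
      simp only [Φ] at h
      rw [← sub_eq_zero] at h
      rw [← h]; module
    have e1 : cr ((x - x') • u + (y - y') • w) w = (x - x') * cr u w := by simp [cr]; ring
    have e2 : cr u ((x - x') • u + (y - y') • w) = (y - y') * cr u w := by simp [cr]; ring
    rw [h0] at e1 e2
    have z1 : (x - x') * cr u w = 0 := by rw [← e1]; simp [cr]
    have z2 : (y - y') * cr u w = 0 := by rw [← e2]; simp [cr]
    constructor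
    · exact sub_eq_zero.1 ((mul_eq_zero.1 z1).resolve_right hne)
    · exact sub_eq_zero.1 ((mul_eq_zero.1 z2).resolve_right hne)
  · intro q
    refine ⟨cr (q - O) w / cr u w, cr u (q - O) / cr u w, ?_⟩
    simp only [Φ]
    rw [add_assoc, ← hdec (q - O)]
    simp
  · intro h
    simp only [p] at h ⊢
    simp [h]

/-- every convex pentagon with `A + B + C = 360°` and `a = d`
admits a monohedral tiling of the plane that is not edge-to-edge. -/
theorem statement_5 (P : ConvexPentagon)
    (hang : P.angle 0 + P.angle 1 + P.angle 2 = 2 * Real.pi)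
    (hside : P.side 0 = P.side 3) :
    ∃ T : Set (Set Plane), IsMonohedralTiling P.carrier T ∧ ¬ IsEdgeToEdge T := by
  exact exists_tiling P hang
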